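/- arXiv:1307.1650 — 4 statements merged into one kernel-verified Lean document; each statement's English description precedes it below -/
import Mathlib

section
/- Let n be an odd positive integer and let P_C(n,p) = ∑_{k=(n+1)/2}^{n} C(n,k) p^k (1-p)^{n-k} denote the probability that a majority of n independent workers cheat when each cheats with probability p. If 0 ≤ p ≤ 1/2, then P_C(n+2,p) ≤ P_C(n,p). -/
/-- The probability that a strict majority of `n` independent workers cheat,
when each cheats independently with probability `p`. -/
noncomputable def majProb (n : ℕ) (p : ℝ) : ℝ :=
  ∑ k ∈ Finset.Icc ((n + 1) / 2) n, (n.choose k : ℝ) * p ^ k * (1 - p) ^ (n - k)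

/-- The binomial probability of exactly `k` successes. -/
noncomputable def bTerm (p : ℝ) (n k : ℕ) : ℝ := (n.choose k : ℝ) * p ^ k * (1 - p) ^ (n - k)

lemma bTerm_zero (p : ℝ) (n k : ℕ) (h : n < k) : bTerm p n k = 0 := by
  simp [bTerm, Nat.choose_eq_zero_of_lt h]

lemma bTerm_succ (p : ℝ) (n k : ℕ) :
    bTerm p (n + 1) (k + 1) = p * bTerm p n k + (1 - p) * bTerm p n (k + 1) := by
  rcases lt_or_ge k n with h | h
  · obtain ⟨d, rfl⟩ := Nat.exists_eq_add_of_lt h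
    have e1 : k + d + 1 + 1 - (k + 1) = d + 1 := by omega
    have e2 : k + d + 1 - k = d + 1 := by omega
    have e3 : k + d + 1 - (k + 1) = d := by omega
    simp only [bTerm, e1, e2, e3, Nat.choose_succ_succ (k + d + 1) k]
    push_cast
    ring
  · rw [bTerm_zero p n (k + 1) (by omega)]
    simp only [bTerm, Nat.choose_succ_succ n k, Nat.choose_eq_zero_of_lt (Nat.lt_succ_of_le h),
      Nat.succ_eq_add_one, Nat.add_sub_add_right]
    push_cast
    ring

/-- A truncated tail of the binomial distribution. -/
noncomputable def bTail (p : ℝ) (n a N : ℕ) : ℝ := ∑ j ∈ Finset.range N, bTerm p n (a + j)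

lemma bTail_succ (p : ℝ) (n a N : ℕ) :
    bTail p (n + 1) (a + 1) N = p * bTail p n a N + (1 - p) * bTail p n (a + 1) N := by
  simp only [bTail, Finset.mul_sum, ← Finset.sum_add_distrib]
  refine Finset.sum_congr rfl fun j _ => ?_
  rw [show a + 1 + j = a + j + 1 by omega, bTerm_succ]

lemma bTail_left (p : ℝ) (n a N : ℕ) :
    bTail p n a (N + 1) = bTerm p n a + bTail p n (a + 1) N := by
  simp only [bTail, Finset.sum_range_succ']
  rw [add_comm]
  congr 1
  refine Finset.sum_congr rfl fun j _ => ?_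
  congr 1
  omega

lemma bTail_right (p : ℝ) (n a N : ℕ) (h : n < a + N) :
    bTail p n a (N + 1) = bTail p n a N := by
  simp only [bTail, Finset.sum_range_succ, bTerm_zero p n _ h, add_zero]

lemma majProb_eq (m : ℕ) (p : ℝ) : majProb (2 * m + 1) p = bTail p (2 * m + 1) (m + 1) (m + 1) := by
  have h : Finset.Icc ((2 * m + 1 + 1) / 2) (2 * m + 1) = Finset.Ico (m + 1) (2 * m + 2) := by
    ext x
    simp only [Finset.mem_Icc, Finset.mem_Ico]
    omega
  rw [majProb, h, Finset.sum_Ico_eq_sum_range, show 2 * m + 2 - (m + 1) = m + 1 by omega]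
  rfl

theorem majProb_add_two_le (n : ℕ) (hn : Odd n) (hpos : 0 < n)
    (p : ℝ) (hp0 : 0 ≤ p) (hp : p ≤ 1 / 2) :
    majProb (n + 2) p ≤ majProb n p := by
  obtain ⟨m, rfl⟩ := hn
  have h1 := majProb_eq (m + 1) p
  rw [show 2 * (m + 1) + 1 = 2 * m + 1 + 1 + 1 by ring, bTail_succ, bTail_succ,
    bTail_succ p _ (m + 1)] at h1
  have h2 := bTail_left p (2 * m + 1) m (m + 1)
  have h3 := bTail_right p (2 * m + 1) (m + 1) (m + 1) (by omega)
  have h4 := bTail_left p (2 * m + 1) (m + 1) (m + 2)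
  have h5 := bTail_right p (2 * m + 1) (m + 1) (m + 2) (by omega)
  have c : (2 * m + 1).choose (m + 1) = (2 * m + 1).choose m := Nat.choose_symm_half m
  have b1 : bTerm p (2 * m + 1) m = ((2 * m + 1).choose m : ℝ) * p ^ m * (1 - p) ^ (m + 1) := by
    rw [bTerm, show 2 * m + 1 - m = m + 1 by omega]
  have b2 : bTerm p (2 * m + 1) (m + 1)
      = ((2 * m + 1).choose m : ℝ) * p ^ (m + 1) * (1 - p) ^ m := by
    rw [bTerm, show 2 * m + 1 - (m + 1) = m by omega, c]
  have hq : 0 ≤ 1 - p := by linarith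
  have key : 0 ≤ ((2 * m + 1).choose m : ℝ) * p ^ (m + 1) * (1 - p) ^ (m + 1) * (1 - 2 * p) :=
    mul_nonneg (by positivity) (by linarith)
  have e : bTail p (2 * m + 1) (m + 1 + 1) (m + 1 + 1)
      = bTail p (2 * m + 1) (m + 1) (m + 1) - bTerm p (2 * m + 1) (m + 1) := by
    have h4' : bTail p (2 * m + 1) (m + 1) (m + 2 + 1) = bTerm p (2 * m + 1) (m + 1)
      + bTail p (2 * m + 1) (m + 1 + 1) (m + 1 + 1) := h4
    have h5' : bTail p (2 * m + 1) (m + 1) (m + 2 + 1)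
      = bTail p (2 * m + 1) (m + 1) (m + 1 + 1) := h5
    linarith
  rw [h2, h3, e, b1, b2] at h1
  rw [majProb_eq m p]
  change majProb (2 * m + 1 + 1 + 1) p ≤ _
  rw [h1, ← sub_nonneg]
  refine key.trans_eq ?_
  ring
end

section
/- Let n be an odd positive integer and p ∈ [0,1]. Then the difference of majority-cheating probabilities satisfies the exact identity P_C(n+2,p) − P_C(n,p) = C(n,(n+1)/2) · (p(1-p))^{(n+1)/2} · (2p − 1). -/
noncomputable def bterm (p : ℝ) (N k : ℕ) : ℝ :=
  (N.choose k : ℝ) * p ^ k * (1 - p) ^ (N - k)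

lemma bterm_succ (p : ℝ) (N a : ℕ) :
    bterm p (N + 1) (a + 1) = p * bterm p N a + (1 - p) * bterm p N (a + 1) := by
  unfold bterm
  rw [Nat.choose_succ_succ, Nat.add_sub_add_right]
  rcases Nat.lt_or_ge a N with h | h
  · obtain ⟨d, rfl⟩ := Nat.exists_eq_add_of_lt h
    have h1 : a + d + 1 - a = d + 1 := by omega
    have h2 : a + d + 1 - (a + 1) = d := by omega
    rw [h1, h2]
    push_cast
    ring
  · rw [Nat.choose_eq_zero_of_lt (show N < a + 1 by omega)]
    push_cast
    ring

lemma bsum_succ (p : ℝ) (N a : ℕ) :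
    ∑ k ∈ Finset.range (a + 1), bterm p (N + 1) k =
      ∑ k ∈ Finset.range (a + 1), bterm p N k - p * bterm p N a := by
  induction a with
  | zero =>
    simp [bterm]
    ring
  | succ a ih =>
    rw [Finset.sum_range_succ, ih, bterm_succ, Finset.sum_range_succ _ (a + 1)]
    ring

lemma majProb_eq_s1 (p : ℝ) (m : ℕ) :
    majProb (2 * m + 1) p = 1 - ∑ k ∈ Finset.range (m + 1), bterm p (2 * m + 1) k := by
  have h1 : ∑ k ∈ Finset.range (2 * m + 1 + 1), bterm p (2 * m + 1) k = 1 := by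
    have := add_pow p (1 - p) (2 * m + 1)
    rw [add_sub_cancel, one_pow] at this
    rw [this]
    refine Finset.sum_congr rfl fun k _ => ?_
    unfold bterm
    ring
  have h2 : majProb (2 * m + 1) p
      = ∑ k ∈ Finset.Ico (m + 1) (2 * m + 1 + 1), bterm p (2 * m + 1) k := by
    unfold majProb bterm
    refine Finset.sum_congr ?_ fun _ _ => rfl
    ext k
    simp only [Finset.mem_Icc, Finset.mem_Ico]
    omega
  rw [h2, ← h1, ← Finset.sum_range_add_sum_Ico _ (show m + 1 ≤ 2 * m + 1 + 1 by omega)]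
  ring

theorem majProb_add_two_sub (n : ℕ) (hn : Odd n) (hpos : 0 < n)
    (p : ℝ) (hp0 : 0 ≤ p) (hp1 : p ≤ 1) :
    majProb (n + 2) p - majProb n p =
      (n.choose ((n + 1) / 2) : ℝ) * (p * (1 - p)) ^ ((n + 1) / 2) * (2 * p - 1) := by
  obtain ⟨m, rfl⟩ := hn
  have e : (2 * m + 1 + 1) / 2 = m + 1 := by omega
  have e2 := majProb_eq_s1 p (m + 1)
  rw [show 2 * (m + 1) + 1 = 2 * m + 1 + 1 + 1 by ring, bsum_succ, bsum_succ,
    Finset.sum_range_succ, show bterm p (2 * m + 1 + 1) (m + 1) = _ from bterm_succ p (2 * m + 1) m] at e2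
  rw [e, show 2 * m + 1 + 2 = 2 * m + 1 + 1 + 1 by ring, e2, majProb_eq_s1]
  have b1 : bterm p (2 * m + 1) m
      = ((2 * m + 1).choose (m + 1) : ℝ) * p ^ m * (1 - p) ^ (m + 1) := by
    unfold bterm
    rw [show 2 * m + 1 - m = m + 1 by omega, Nat.choose_symm_half]
  have b2 : bterm p (2 * m + 1) (m + 1)
      = ((2 * m + 1).choose (m + 1) : ℝ) * p ^ (m + 1) * (1 - p) ^ m := by
    unfold bterm
    rw [show 2 * m + 1 - (m + 1) = m by omega]
  rw [b1, b2, mul_pow]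
  ring
end

section
/- (Contractor scenario, tunable n, games with n = 1.) Let S, WC_T, WP_CH, MC_V, MB_R be reals with 0 < WC_T < S, WP_CH > 0, and MC_V ≥ 0. Define U_a = MB_R − (WC_T/(S + WP_CH))·MC_V − S and U_∅ = MB_R − (WC_T/S)·(MC_V + S). Then U_a > U_∅ if and only if MC_V > S·(S/WC_T − 1)·(S/WP_CH + 1). -/
/-- Contractor scenario with a single worker (`n = 1`): game `(0:n, R_a)` yields a
higher master utility than game `(0:n, R_∅)` iff
`MC_V > S·(S/WC_T − 1)·(S/WP_CH + 1)`. -/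
theorem contractor_n_one_compare (S WCt WPch MCv MBr : ℝ)
    (hWCt : 0 < WCt) (hS : WCt < S) (hWPch : 0 < WPch) (hMCv : 0 ≤ MCv) :
    MBr - WCt / (S + WPch) * MCv - S > MBr - WCt / S * (MCv + S) ↔
      MCv > S * (S / WCt - 1) * (S / WPch + 1) := by
  have hS0 : 0 < S := hWCt.trans hS
  have hSP : 0 < S + WPch := by positivity
  have key : (MBr - WCt / (S + WPch) * MCv - S) - (MBr - WCt / S * (MCv + S)) =
      WCt * WPch / (S * (S + WPch)) * (MCv - S * (S / WCt - 1) * (S / WPch + 1)) := by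
    field_simp
    ring
  have hK : 0 < WCt * WPch / (S * (S + WPch)) := by positivity
  rw [gt_iff_lt, gt_iff_lt, ← sub_pos, key, mul_pos_iff_of_pos_left hK, sub_pos]
end

section
/- Let n ≥ 1 be an integer, and let p_C ∈ [0, 1/2], P ∈ [0, 1/2], p_V ∈ [0, 1], MB_R ≥ 0, S ≥ 0, MC_V ≥ 0, MP_W be reals with MP_W ≥ 2·MC_V. Then p_V·((1 − p_C^n)·MB_R − MC_V − (1 − p_C)·n·S) + (1 − p_V)·((1 − P)·MB_R − P·MP_W − n·S) ≥ (MB_R − MP_W)/2 − n·S. -/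
/-- Game `1:1^n` under reward model `R_m`: with `p_C ≤ 1/2`, majority-cheating
probability `P ≤ 1/2` and `MP_W ≥ 2·MC_V`, the master's expected utility is at least
`(MB_R − MP_W)/2 − n·S`. -/
theorem master_utility_lower_bound (n : ℕ) (hn : 1 ≤ n)
    (pC P pV MBr S MCv MPw : ℝ)
    (hpC0 : 0 ≤ pC) (hpC : pC ≤ 1 / 2)
    (hP0 : 0 ≤ P) (hP : P ≤ 1 / 2)
    (hpV0 : 0 ≤ pV) (hpV1 : pV ≤ 1)
    (hMBr : 0 ≤ MBr) (hS : 0 ≤ S) (hMCv : 0 ≤ MCv) (hMPw : 2 * MCv ≤ MPw) :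
    pV * ((1 - pC ^ n) * MBr - MCv - (1 - pC) * (n : ℝ) * S) +
        (1 - pV) * ((1 - P) * MBr - P * MPw - (n : ℝ) * S) ≥
      (MBr - MPw) / 2 - (n : ℝ) * S := by
  have hpow : pC ^ n ≤ 1 / 2 :=
    (pow_le_of_le_one hpC0 (by linarith) (by omega)).trans hpC
  have hnS : 0 ≤ (n : ℝ) * S := mul_nonneg (Nat.cast_nonneg n) hS
  have h1 : (MBr - MPw) / 2 - (n : ℝ) * S ≤
      (1 - pC ^ n) * MBr - MCv - (1 - pC) * (n : ℝ) * S := by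
    have a := mul_nonneg (sub_nonneg.2 hpow) hMBr
    have b := mul_nonneg hpC0 hnS
    linarith
  have h2 : (MBr - MPw) / 2 - (n : ℝ) * S ≤
      (1 - P) * MBr - P * MPw - (n : ℝ) * S := by
    have a := mul_nonneg (sub_nonneg.2 hP) hMBr
    have b := mul_nonneg (sub_nonneg.2 hP) (show 0 ≤ MPw by linarith)
    linarith
  have h3 := mul_le_mul_of_nonneg_left h1 hpV0
  have h4 := mul_le_mul_of_nonneg_left h2 (sub_nonneg.2 hpV1)
  linarith
end
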